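/- Let −1 < a < 2. For every x > 0 and every t ≠ 0 one has, as a generalized Riemann integral, lim_{R→∞} ∫₀^R S_a(x,y,t) y^a dy = 1. -/

import Mathlib

open MeasureTheory Filter Set

noncomputable def besselJ (ν : ℂ) (z : ℝ) : ℂ :=
  ∑' k : ℕ, ((-1 : ℂ) ^ k / (Complex.Gamma (k + 1) * Complex.Gamma (ν + k + 1))) *
    ((z : ℂ) / 2) ^ (2 * (k : ℂ) + ν)

noncomputable def Skernel (a x y t : ℝ) : ℂ :=
  if 0 < t then
    Complex.exp (-(Complex.I) * (((a + 1) * Real.pi / 4 : ℝ) : ℂ)) *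
      (((2 * |t|) ^ (-(a + 1) / 2) : ℝ) : ℂ) *
      (((x * y / (2 * |t|)) ^ ((1 - a) / 2) : ℝ) : ℂ) *
      besselJ (((a - 1) / 2 : ℝ) : ℂ) (x * y / (2 * |t|)) *
      Complex.exp (Complex.I * ((((x ^ 2 + y ^ 2) / (4 * |t|)) : ℝ) : ℂ))
  else
    Complex.exp ((Complex.I) * (((a + 1) * Real.pi / 4 : ℝ) : ℂ)) *
      (((2 * |t|) ^ (-(a + 1) / 2) : ℝ) : ℂ) *
      (((x * y / (2 * |t|)) ^ ((1 - a) / 2) : ℝ) : ℂ) *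
      besselJ (((a - 1) / 2 : ℝ) : ℂ) (x * y / (2 * |t|)) *
      Complex.exp (-(Complex.I) * ((((x ^ 2 + y ^ 2) / (4 * |t|)) : ℝ) : ℂ))

/-!
The substitution `v = (x y / 4t)²` turns the mass of the kernel into `p^(ν+1) e^(1/p)` times the
Laplace transform of `g_ν(v) = v^(ν/2) J_ν(2√v)`, `ν = (a - 1) / 2`, at the purely imaginary point
`p = -4it / x²`. For `Re p > 0`, termwise integration of the series of `g_ν` gives the transform
`p^(-(ν+1)) e^(-1/p)`, so it suffices that the transform converges on `Re p = 0`, `p ≠ 0`, and is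
continuous up to there. As `g_ν' = g_{ν-1}` and, by an energy estimate for Bessel's equation,
`g_ν = O(v^(ν/2 - 1/4))` at infinity, two integrations by parts show this for `ν < 1/2`; the
boundary terms at infinity vanish because of this restriction.
-/

section ExponentialSeries

variable {𝕜 : Type*} [RCLike 𝕜] {a : ℕ → 𝕜} {C : ℝ}

lemma summable_mul_pow_div_factorial (ha : ∀ k, ‖a k‖ ≤ C) (w : 𝕜) :
    Summable fun k : ℕ => a k * (w ^ k / k.factorial) := by
  refine .of_norm_bounded ((Real.summable_pow_div_factorial ‖w‖).mul_left C) fun k => ?_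
  rw [norm_mul, norm_div, norm_pow, RCLike.norm_natCast]
  gcongr
  exact ha k

lemma natCast_succ_mul_pow_div_factorial_succ (k : ℕ) (w : 𝕜) :
    (k + 1 : ℕ) * (w ^ k / (k + 1).factorial) = w ^ k / k.factorial := by
  have : (k.factorial : 𝕜) ≠ 0 := by exact_mod_cast k.factorial_ne_zero
  have : (k : 𝕜) + 1 ≠ 0 := by exact_mod_cast k.succ_ne_zero
  rw [Nat.factorial_succ]
  push_cast
  field_simp

lemma hasDerivAt_pow_succ_div_factorial (k : ℕ) (w : 𝕜) :
    HasDerivAt (fun z : 𝕜 => z ^ (k + 1) / (k + 1).factorial) (w ^ k / k.factorial) w := by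
  refine ((hasDerivAt_pow (k + 1) w).div_const ((k + 1).factorial : 𝕜)).congr_deriv ?_
  rw [← natCast_succ_mul_pow_div_factorial_succ, Nat.add_sub_cancel, mul_div_assoc]

lemma hasDerivAt_tsum_mul_pow_div_factorial (ha : ∀ k, ‖a k‖ ≤ C) (w : 𝕜) :
    HasDerivAt (fun z : 𝕜 => ∑' k : ℕ, a k * (z ^ k / k.factorial))
      (∑' k : ℕ, a (k + 1) * (w ^ k / k.factorial)) w := by
  have hC : 0 ≤ C := (norm_nonneg _).trans (ha 0)
  have hsplit : (fun z : 𝕜 => ∑' k : ℕ, a k * (z ^ k / k.factorial)) =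
      fun z => a 0 + ∑' k : ℕ, a (k + 1) * (z ^ (k + 1) / (k + 1).factorial) := by
    funext z
    rw [(summable_mul_pow_div_factorial ha z).tsum_eq_zero_add]
    simp
  rw [hsplit]
  have hbound : ∀ k, ∀ z ∈ Metric.ball (0 : 𝕜) (‖w‖ + 1),
      ‖a (k + 1) * (z ^ k / k.factorial)‖ ≤ C * ((‖w‖ + 1) ^ k / k.factorial) := fun k z hz => by
    rw [norm_mul, norm_div, norm_pow, RCLike.norm_natCast]
    gcongr
    · exact ha (k + 1)
    · exact (mem_ball_zero_iff.1 hz).le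
  have hderiv : ∀ k, ∀ z ∈ Metric.ball (0 : 𝕜) (‖w‖ + 1),
      HasDerivAt (fun z => a (k + 1) * (z ^ (k + 1) / (k + 1).factorial))
        (a (k + 1) * (z ^ k / k.factorial)) z :=
    fun k z _ => (hasDerivAt_pow_succ_div_factorial k z).const_mul (a (k + 1))
  have hw : w ∈ Metric.ball (0 : 𝕜) (‖w‖ + 1) := by simp
  have hsum := (summable_nat_add_iff 1).2 (summable_mul_pow_div_factorial ha w)
  exact (hasDerivAt_tsum_of_isPreconnected
    ((Real.summable_pow_div_factorial (‖w‖ + 1)).mul_left C) Metric.isOpen_ball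
    (convex_ball _ _).isPreconnected hderiv hbound hw hsum hw).const_add (a 0)

lemma hasSum_natCast_mul_mul_pow_div_factorial (ha : ∀ k, ‖a k‖ ≤ C) (w : 𝕜) :
    HasSum (fun k : ℕ => k * (a k * (w ^ k / k.factorial)))
      (w * ∑' k : ℕ, a (k + 1) * (w ^ k / k.factorial)) := by
  rw [← hasSum_nat_add_iff' 1]
  convert! (summable_mul_pow_div_factorial (fun k => ha (k + 1)) w).hasSum.mul_left w using 1
  · funext k
    rw [← natCast_succ_mul_pow_div_factorial_succ k]
    ring
  · simp

end ExponentialSeries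

section BesselClifford

lemma inv_Gamma_eq_mul_inv_Gamma_add_one (s : ℝ) :
    (Real.Gamma s)⁻¹ = s * (Real.Gamma (s + 1))⁻¹ := by
  obtain rfl | hs := eq_or_ne s 0
  · simp [Real.Gamma_zero]
  · rw [Real.Gamma_add_one hs, mul_inv, mul_inv_cancel_left₀ hs]

lemma exists_norm_inv_Gamma_add_natCast_le (ν : ℝ) :
    ∃ C : ℝ, ∀ k : ℕ, ‖(Real.Gamma (ν + k + 1))⁻¹‖ ≤ C := by
  have hev : ∀ᶠ k : ℕ in atTop, ‖(Real.Gamma (ν + k + 1))⁻¹‖ ≤ 1 := by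
    filter_upwards [eventually_ge_atTop ⌈1 - ν⌉₊] with k hk
    have hk : 2 ≤ ν + k + 1 := by linarith [Nat.ceil_le.1 hk]
    have hΓ : 1 ≤ Real.Gamma (ν + k + 1) := by
      simpa [Real.Gamma_two] using
        Real.Gamma_strictMonoOn_Ici.monotoneOn (mem_Ici.2 le_rfl) (mem_Ici.2 hk) hk
    rw [norm_inv, Real.norm_of_nonneg (by linarith)]
    exact inv_le_one_of_one_le₀ hΓ
  obtain ⟨C, hC⟩ := (isBoundedUnder_of_eventually_le hev).bddAbove_range
  exact ⟨C, fun k => hC (mem_range_self k)⟩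

/-- The Bessel–Clifford function `∑ wᵏ / (k! Γ(ν + k + 1))`, an entire function of `w` for every
real `ν`: Mathlib's values `Γ(-n) = 0` and `0⁻¹ = 0` agree with the zeros of `1 / Γ`. -/
noncomputable def besselClifford (ν w : ℝ) : ℝ :=
  ∑' k : ℕ, (Real.Gamma (ν + k + 1))⁻¹ * (w ^ k / k.factorial)

lemma hasSum_besselClifford (ν w : ℝ) :
    HasSum (fun k : ℕ => (Real.Gamma (ν + k + 1))⁻¹ * (w ^ k / k.factorial))
      (besselClifford ν w) :=
  have ⟨_, hC⟩ := exists_norm_inv_Gamma_add_natCast_le ν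
  (summable_mul_pow_div_factorial hC w).hasSum

lemma besselClifford_add_one (ν w : ℝ) : besselClifford (ν + 1) w =
    ∑' k : ℕ, (Real.Gamma (ν + (k + 1 : ℕ) + 1))⁻¹ * (w ^ k / k.factorial) := by
  refine tsum_congr fun k => ?_
  rw [Nat.cast_add_one, add_right_comm ν 1, add_assoc ν]

lemma hasDerivAt_besselClifford (ν w : ℝ) :
    HasDerivAt (besselClifford ν) (besselClifford (ν + 1) w) w := by
  obtain ⟨C, hC⟩ := exists_norm_inv_Gamma_add_natCast_le ν
  rw [besselClifford_add_one]
  exact hasDerivAt_tsum_mul_pow_div_factorial hC w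

lemma continuous_besselClifford (ν : ℝ) : Continuous (besselClifford ν) :=
  continuous_iff_continuousAt.2 fun w => (hasDerivAt_besselClifford ν w).continuousAt

lemma besselClifford_recurrence (ν w : ℝ) :
    w * besselClifford (ν + 2) w + (ν + 1) * besselClifford (ν + 1) w = besselClifford ν w := by
  obtain ⟨C, hC⟩ := exists_norm_inv_Gamma_add_natCast_le (ν + 1)
  have hshift : w * besselClifford (ν + 2) w =
      w * ∑' k : ℕ, (Real.Gamma (ν + 1 + (k + 1 : ℕ) + 1))⁻¹ * (w ^ k / k.factorial) := by
    rw [← besselClifford_add_one, add_assoc, one_add_one_eq_two]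
  rw [hshift]
  refine ((hasSum_natCast_mul_mul_pow_div_factorial hC w).add
    ((hasSum_besselClifford (ν + 1) w).mul_left (ν + 1))).unique ?_
  convert! hasSum_besselClifford ν w using 2 with k
  rw [inv_Gamma_eq_mul_inv_Gamma_add_one (ν + k + 1), add_right_comm ν 1]
  ring

end BesselClifford

section Decay

-- The factor `exp (κ / r)` compensates for the growth `|E'| ≤ κ / r² * E` of `E = u'² + u²`.
lemma antitoneOn_energy_mul_exp_of_hasDerivAt {u u' q : ℝ → ℝ} {κ : ℝ}
    (hu : ∀ r, 0 < r → HasDerivAt u (u' r) r)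
    (hu' : ∀ r, 0 < r → HasDerivAt u' (-(1 + q r) * u r) r)
    (hq : ∀ r, 0 < r → |q r| ≤ κ / r ^ 2) :
    AntitoneOn (fun r => (u' r ^ 2 + u r ^ 2) * Real.exp (κ / r)) (Ioi 0) := by
  have hderiv : ∀ r, 0 < r → HasDerivAt (fun r => (u' r ^ 2 + u r ^ 2) * Real.exp (κ / r))
      ((-2 * q r * (u r * u' r) - κ / r ^ 2 * (u' r ^ 2 + u r ^ 2)) * Real.exp (κ / r)) r := by
    intro r hr
    have hexp := ((hasDerivAt_inv hr.ne').const_mul κ).exp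
    refine ((((hu' r hr).pow 2).add ((hu r hr).pow 2)).mul hexp).congr_deriv ?_
    simp only [Pi.add_apply, Pi.pow_apply, div_eq_mul_inv]
    ring
  refine antitoneOn_of_deriv_nonpos (convex_Ioi 0)
    (fun r hr => (hderiv r hr).continuousAt.continuousWithinAt) (fun r hr => ?_) fun r hr => ?_
  all_goals rw [interior_Ioi] at hr
  · exact (hderiv r hr).differentiableAt.differentiableWithinAt
  rw [(hderiv r hr).deriv]
  refine mul_nonpos_of_nonpos_of_nonneg (sub_nonpos.2 ?_) (Real.exp_pos _).le
  calc -2 * q r * (u r * u' r) ≤ |-2 * q r * (u r * u' r)| := le_abs_self _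
    _ = |q r| * (2 * |u' r| * |u r|) := by
      rw [abs_mul, abs_mul, abs_mul, abs_neg, abs_two]
      ring
    _ ≤ |q r| * (u' r ^ 2 + u r ^ 2) := by
      gcongr
      simpa using two_mul_le_add_sq |u' r| |u r|
    _ ≤ κ / r ^ 2 * (u' r ^ 2 + u r ^ 2) := by
      gcongr
      exact hq r hr

lemma isBigO_one_of_hasDerivAt_perturbed_oscillator {u u' q : ℝ → ℝ} {κ : ℝ}
    (hu : ∀ r, 0 < r → HasDerivAt u (u' r) r)
    (hu' : ∀ r, 0 < r → HasDerivAt u' (-(1 + q r) * u r) r)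
    (hq : ∀ r, 0 < r → |q r| ≤ κ / r ^ 2) :
    u =O[atTop] fun _ => (1 : ℝ) := by
  have hκ : 0 ≤ κ := by simpa using (abs_nonneg _).trans (hq 1 one_pos)
  refine .of_bound √((u' 1 ^ 2 + u 1 ^ 2) * Real.exp (κ / 1)) ?_
  filter_upwards [eventually_ge_atTop 1] with r hr
  rw [norm_one, mul_one, Real.norm_eq_abs]
  refine Real.abs_le_sqrt ?_
  calc u r ^ 2 ≤ u' r ^ 2 + u r ^ 2 := le_add_of_nonneg_left (sq_nonneg _)
    _ ≤ (u' r ^ 2 + u r ^ 2) * Real.exp (κ / r) :=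
      le_mul_of_one_le_right (by positivity) (Real.one_le_exp (by positivity))
    _ ≤ (u' 1 ^ 2 + u 1 ^ 2) * Real.exp (κ / 1) :=
      antitoneOn_energy_mul_exp_of_hasDerivAt hu hu' hq (mem_Ioi.2 one_pos)
        (mem_Ioi.2 (one_pos.trans_le hr)) hr

lemma hasDerivAt_rpow_mul_besselClifford_neg_sq (s ν : ℝ) {r : ℝ} (hr : 0 < r) :
    HasDerivAt (fun r => r ^ s * besselClifford ν (-(r / 2) ^ 2))
      (s * (r ^ (s - 1) * besselClifford ν (-(r / 2) ^ 2)) -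
        r ^ (s + 1) * besselClifford (ν + 1) (-(r / 2) ^ 2) / 2) r := by
  have hsq : HasDerivAt (fun r : ℝ => -(r / 2) ^ 2) (-(r / 2)) r :=
    (((hasDerivAt_id r).div_const 2).pow 2).neg.congr_deriv <| by
      simp only [Nat.cast_ofNat, id_eq, Nat.add_one_sub_one, pow_one]
      ring
  refine ((Real.hasDerivAt_rpow_const (.inl hr.ne')).mul
    ((hasDerivAt_besselClifford ν _).comp r hsq)).congr_deriv ?_
  rw [Function.comp_apply, Real.rpow_add_one hr.ne']
  ring

lemma isBigO_rpow_mul_besselClifford_neg_sq (ν : ℝ) :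
    (fun r => r ^ (ν + 1 / 2) * besselClifford ν (-(r / 2) ^ 2)) =O[atTop] fun _ => (1 : ℝ) := by
  refine isBigO_one_of_hasDerivAt_perturbed_oscillator
    (q := fun r => -(ν ^ 2 - 1 / 4) / r ^ 2) (κ := |ν ^ 2 - 1 / 4|)
    (fun r hr => hasDerivAt_rpow_mul_besselClifford_neg_sq _ ν hr) (fun r hr => ?_)
    fun r _ => by rw [abs_div, abs_neg, abs_of_nonneg (sq_nonneg r)]
  refine (((hasDerivAt_rpow_mul_besselClifford_neg_sq (ν + 1 / 2 - 1) ν hr).const_mul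
    (ν + 1 / 2)).sub ((hasDerivAt_rpow_mul_besselClifford_neg_sq (ν + 1 / 2 + 1) (ν + 1)
      hr).div_const 2)).congr_deriv ?_
  have hrec := besselClifford_recurrence ν (-(r / 2) ^ 2)
  have hpow : r ^ (ν + 1 / 2) = r ^ (ν + 1 / 2 - 1 - 1) * r ^ 2 := by
    rw [← Real.rpow_natCast, ← Real.rpow_add hr]
    push_cast
    ring_nf
  simp only [sub_add_cancel, add_sub_cancel_right, Real.rpow_add_one hr.ne', hpow,
    show ν + 1 + 1 = ν + 2 by ring, ← hrec]
  field_simp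
  ring

lemma isBigO_besselClifford_neg (ν : ℝ) :
    (fun v => besselClifford ν (-v)) =O[atTop] fun v => v ^ (-ν / 2 - 1 / 4) := by
  have htend : Tendsto (fun v => 2 * √v) atTop atTop :=
    Real.tendsto_sqrt_atTop.const_mul_atTop two_pos
  have hmul := ((isBigO_rpow_mul_besselClifford_neg_sq ν).comp_tendsto htend).mul
    (Asymptotics.isBigO_refl (fun v => (2 * √v) ^ (-(ν + 1 / 2))) atTop)
  refine (hmul.congr' ?_ ?_).trans
    (Asymptotics.isBigO_const_mul_self (2 ^ (-(ν + 1 / 2))) _ _)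
  all_goals filter_upwards [eventually_gt_atTop 0] with v hv
  · have hpos : 0 < 2 * √v := by positivity
    rw [Function.comp_apply, mul_div_cancel_left₀ _ two_ne_zero, Real.sq_sqrt hv.le,
      mul_right_comm, ← Real.rpow_add hpos, add_neg_cancel, Real.rpow_zero, one_mul]
  · rw [Function.comp_apply, one_mul, Real.mul_rpow zero_le_two (Real.sqrt_nonneg v),
      Real.sqrt_eq_rpow, ← Real.rpow_mul hv.le]
    ring_nf

end Decay

section HankelClifford

/-- The Hankel–Clifford kernel `v^(ν/2) J_ν(2√v)`, written as an entire function times `v^ν` so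
that differentiation lowers the index by one. -/
noncomputable def hankelClifford (ν v : ℝ) : ℝ :=
  v ^ ν * besselClifford ν (-v)

lemma hasDerivAt_hankelClifford (ν : ℝ) {v : ℝ} (hv : 0 < v) :
    HasDerivAt (hankelClifford ν) (hankelClifford (ν - 1) v) v := by
  refine ((Real.hasDerivAt_rpow_const (.inl hv.ne')).mul
    ((hasDerivAt_besselClifford ν _).comp v (hasDerivAt_neg v))).congr_deriv ?_
  have hrec := besselClifford_recurrence (ν - 1) (-v)
  rw [sub_add_cancel, show ν - 1 + 2 = ν + 1 by ring] at hrec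
  rw [hankelClifford, ← hrec, Function.comp_apply, Real.rpow_sub_one hv.ne']
  field_simp
  ring

lemma continuousOn_hankelClifford (ν : ℝ) : ContinuousOn (hankelClifford ν) (Ioi 0) :=
  fun _ hv => (hasDerivAt_hankelClifford ν hv).continuousAt.continuousWithinAt

lemma intervalIntegrable_hankelClifford {ν : ℝ} (hν : -1 < ν) (a b : ℝ) :
    IntervalIntegrable (hankelClifford ν) volume a b :=
  (intervalIntegral.intervalIntegrable_rpow' hν).mul_continuousOn
    ((continuous_besselClifford ν).comp continuous_neg).continuousOn

lemma isBigO_hankelClifford (ν : ℝ) :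
    hankelClifford ν =O[atTop] fun v => v ^ (ν / 2 - 1 / 4) := by
  refine ((Asymptotics.isBigO_refl (fun v : ℝ => v ^ ν) atTop).mul
    (isBigO_besselClifford_neg ν)).congr' .rfl ?_
  filter_upwards [eventually_gt_atTop 0] with v hv
  rw [← Real.rpow_add hv]
  ring_nf

lemma tendsto_hankelClifford_atTop_zero {ν : ℝ} (hν : ν < 1 / 2) :
    Tendsto (hankelClifford ν) atTop (nhds 0) := by
  refine (isBigO_hankelClifford ν).trans_tendsto ?_
  simpa using tendsto_rpow_neg_atTop (y := -(ν / 2 - 1 / 4)) (by linarith)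

lemma integrableOn_hankelClifford_Ici_one {ν : ℝ} (hν : ν < -(3 / 2)) :
    IntegrableOn (hankelClifford ν) (Ici 1) :=
  have hcont : ContinuousOn (hankelClifford ν) (Ici 1) :=
    (continuousOn_hankelClifford ν).mono (Ici_subset_Ioi.2 one_pos)
  (hcont.locallyIntegrableOn measurableSet_Ici).integrableOn_of_isBigO_atTop
    (isBigO_hankelClifford ν)
    ⟨Ioi 1, Ioi_mem_atTop 1, integrableOn_Ioi_rpow_of_lt (by linarith) one_pos⟩

end HankelClifford

section LaplaceTransform

variable {g g' : ℝ → ℂ} {a b : ℝ}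

lemma norm_cexp_neg_mul_ofReal_le_one {p : ℂ} (hp : 0 ≤ p.re) {v : ℝ} (hv : 0 ≤ v) :
    ‖Complex.exp (-(p * v))‖ ≤ 1 := by
  rw [Complex.norm_exp, Complex.neg_re, Complex.re_mul_ofReal]
  exact Real.exp_le_one_iff.2 (neg_nonpos.2 (mul_nonneg hp hv))

lemma integrableOn_mul_cexp {s : Set ℝ} (hs : MeasurableSet s) (hs0 : s ⊆ Ici 0)
    (hg : IntegrableOn g s) {p : ℂ} (hp : 0 ≤ p.re) :
    IntegrableOn (fun v => g v * Complex.exp (-(p * v))) s :=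
  hg.mul_bdd (c := 1) (by fun_prop)
    (ae_restrict_of_forall_mem hs fun _ hv => norm_cexp_neg_mul_ofReal_le_one hp (hs0 hv))

lemma continuousOn_setIntegral_mul_cexp {s : Set ℝ} (hs : MeasurableSet s) (hs0 : s ⊆ Ici 0)
    (hg : IntegrableOn g s) :
    ContinuousOn (fun p : ℂ => ∫ v in s, g v * Complex.exp (-(p * v))) {p | 0 ≤ p.re} := by
  refine continuousOn_of_dominated
    (fun p hp => (integrableOn_mul_cexp hs hs0 hg hp).aestronglyMeasurable)
    (fun p hp => ae_restrict_of_forall_mem hs fun v hv => ?_) hg.norm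
    (Eventually.of_forall fun v => by fun_prop)
  rw [norm_mul]
  exact mul_le_of_le_one_right (norm_nonneg _) (norm_cexp_neg_mul_ofReal_le_one hp (hs0 hv))

/-- The closed right half-plane without the origin, to whose boundary the Laplace transforms
below extend as conditionally convergent integrals. -/
def puncturedRightHalfPlane : Set ℂ := {p | 0 ≤ p.re ∧ p ≠ 0}

/-- The improper integrals `∫_a^∞ g(v) e^{-pv} dv` converge, conditionally, for all nonzero `p`
with `0 ≤ Re p`, and depend continuously on `p`. -/
def HasContinuousLaplaceTransform (g : ℝ → ℂ) (a : ℝ) : Prop :=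
  ∃ L : ℂ → ℂ, ContinuousOn L puncturedRightHalfPlane ∧ ∀ p ∈ puncturedRightHalfPlane,
    Tendsto (fun R => ∫ v in a..R, g v * Complex.exp (-(p * v))) atTop (nhds (L p))

lemma puncturedRightHalfPlane_subset_slitPlane : puncturedRightHalfPlane ⊆ Complex.slitPlane :=
  fun _ hp => hp.1.lt_or_eq.imp id fun hre him => hp.2 (Complex.ext hre.symm him)

namespace HasContinuousLaplaceTransform

lemma of_integrableOn (ha : 0 ≤ a) (hg : IntegrableOn g (Ioi a)) :
    HasContinuousLaplaceTransform g a :=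
  have ha : Ioi a ⊆ Ici 0 := fun _ hv => ha.trans (le_of_lt hv)
  ⟨fun p => ∫ v in Ioi a, g v * Complex.exp (-(p * v)),
    (continuousOn_setIntegral_mul_cexp measurableSet_Ioi ha hg).mono fun _ hp => hp.1,
    fun _ hp => intervalIntegral_tendsto_integral_Ioi a
      (integrableOn_mul_cexp measurableSet_Ioi ha hg hp.1) tendsto_id⟩

lemma of_hasDerivAt (hderiv : ∀ v ∈ Ici a, HasDerivAt g (g' v) v)
    (hcont : ContinuousOn g' (Ici a)) (hzero : Tendsto g atTop (nhds 0))
    (h : HasContinuousLaplaceTransform g' a) : HasContinuousLaplaceTransform g a := by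
  obtain ⟨L, hL, hlim⟩ := h
  refine ⟨fun p => (g a * Complex.exp (-(p * a)) + L p) / p,
    .div (.add (by fun_prop) hL) continuousOn_id fun p hp => hp.2, fun p hp => ?_⟩
  have hend : Tendsto (fun R : ℝ => g R * Complex.exp (-(p * R))) atTop (nhds 0) := by
    refine squeeze_zero_norm' ?_ (tendsto_zero_iff_norm_tendsto_zero.1 hzero)
    filter_upwards [eventually_ge_atTop 0] with R hR
    rw [norm_mul]
    exact mul_le_of_le_one_right (norm_nonneg _) (norm_cexp_neg_mul_ofReal_le_one hp.1 hR)
  have hparts : ∀ᶠ R in atTop, (g a * Complex.exp (-(p * a)) - g R * Complex.exp (-(p * R)) +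
      ∫ v in a..R, g' v * Complex.exp (-(p * v))) / p =
        ∫ v in a..R, g v * Complex.exp (-(p * v)) := by
    filter_upwards [eventually_ge_atTop a] with R hR
    have hIci : uIcc a R ⊆ Ici a := by
      rw [uIcc_of_le hR]
      exact Icc_subset_Ici_self
    have hexp : ∀ v : ℝ, HasDerivAt (fun v : ℝ => -(Complex.exp (-(p * v)) / p))
        (Complex.exp (-(p * v))) v := fun v => by
      refine (((hasDerivAt_id v).ofReal_comp.const_mul p).neg.cexp.div_const p).neg.congr_deriv ?_
      have := hp.2
      simp only [id_eq, Pi.neg_apply, Complex.ofReal_one, mul_one, mul_neg]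
      field_simp
    rw [intervalIntegral.integral_mul_deriv_eq_deriv_mul (fun v hv => hderiv v (hIci hv))
      (fun v _ => hexp v) (hcont.mono hIci).intervalIntegrable
      (Continuous.intervalIntegrable (by fun_prop) _ _)]
    simp only [mul_neg, ← mul_div_assoc, intervalIntegral.integral_neg,
      intervalIntegral.integral_div]
    ring
  refine Tendsto.congr' hparts ?_
  simpa using ((hend.const_sub (g a * Complex.exp (-(p * a)))).add (hlim p hp)).div_const p

lemma of_le (ha : 0 ≤ a) (hab : a ≤ b) (hg : ∀ R, IntervalIntegrable g volume a R)
    (h : HasContinuousLaplaceTransform g b) : HasContinuousLaplaceTransform g a := by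
  obtain ⟨L, hL, hlim⟩ := h
  have hIoc : Ioc a b ⊆ Ici 0 := fun _ hv => ha.trans hv.1.le
  have hexp : ∀ p R, IntervalIntegrable (fun v => g v * Complex.exp (-(p * v))) volume a R :=
    fun p R => (hg R).mul_continuousOn (Continuous.continuousOn (by fun_prop))
  refine ⟨fun p => (∫ v in a..b, g v * Complex.exp (-(p * v))) + L p, .add ?_ hL,
    fun p hp => ((hlim p hp).const_add _).congr fun R =>
      intervalIntegral.integral_add_adjacent_intervals (hexp p b)
        ((hexp p b).symm.trans (hexp p R))⟩
  simp only [intervalIntegral.integral_of_le hab]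
  exact (continuousOn_setIntegral_mul_cexp measurableSet_Ioc hIoc (hg b).1).mono fun _ hp => hp.1

lemma tendsto_of_integral_eq {F : ℂ → ℂ} (h : HasContinuousLaplaceTransform g a)
    (hF : ContinuousOn F puncturedRightHalfPlane)
    (hint : ∀ p : ℂ, 0 < p.re → IntegrableOn (fun v => g v * Complex.exp (-(p * v))) (Ioi a))
    (heq : ∀ p : ℂ, 0 < p.re → ∫ v in Ioi a, g v * Complex.exp (-(p * v)) = F p)
    {p : ℂ} (hp : p ∈ puncturedRightHalfPlane) :
    Tendsto (fun R => ∫ v in a..R, g v * Complex.exp (-(p * v))) atTop (nhds (F p)) := by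
  obtain ⟨L, hL, hlim⟩ := h
  have hsub : {p : ℂ | 0 < p.re} ⊆ puncturedRightHalfPlane :=
    fun _ hq => ⟨le_of_lt hq, Complex.ne_zero_of_re_pos hq⟩
  have hright : EqOn L F {p | 0 < p.re} := fun q hq =>
    tendsto_nhds_unique (hlim q (hsub hq))
      (heq q hq ▸ intervalIntegral_tendsto_integral_Ioi a (hint q hq) tendsto_id)
  have hclosure : puncturedRightHalfPlane ⊆ closure {p | 0 < p.re} := by
    rw [Complex.closure_setOfPred_lt_re]
    exact fun _ hq => hq.1
  exact hright.of_subset_closure hL hF hsub hclosure hp ▸ hlim p hp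

end HasContinuousLaplaceTransform

lemma eqOn_of_frequently_ofReal_eq {f g : ℂ → ℂ} {U : Set ℂ} {x : ℝ}
    (hf : AnalyticOnNhd ℂ f U) (hg : AnalyticOnNhd ℂ g U) (hU : IsPreconnected U)
    (hx : (x : ℂ) ∈ U) (h : ∃ᶠ y : ℝ in nhdsWithin x {x}ᶜ, f y = g y) : EqOn f g U := by
  have htend : Tendsto ((↑) : ℝ → ℂ) (nhdsWithin x {x}ᶜ) (nhdsWithin (x : ℂ) {(x : ℂ)}ᶜ) :=
    Complex.continuous_ofReal.continuousWithinAt.tendsto_nhdsWithin fun y hy => by simpa using hy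
  exact hf.eqOn_of_preconnected_of_frequently_eq hg hU hx (htend.frequently h)

lemma analyticOnNhd_integral_rpow_mul_cexp {s : ℝ} (hs : 0 < s) :
    AnalyticOnNhd ℂ (fun p => ∫ v in Ioi (0 : ℝ), ((v ^ (s - 1) : ℝ) : ℂ) * Complex.exp (-(p * v)))
      {p | 0 < p.re} := by
  set μ : Measure ℝ := (volume.restrict (Ioi 0)).withDensity fun v => ENNReal.ofReal (v ^ (s - 1))
  have hmeas : Measurable fun v : ℝ => ENNReal.ofReal (v ^ (s - 1)) := by fun_prop
  have hmgf : (fun p => ∫ v in Ioi (0 : ℝ), ((v ^ (s - 1) : ℝ) : ℂ) * Complex.exp (-(p * v))) =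
      ProbabilityTheory.complexMGF id μ ∘ Neg.neg := by
    funext p
    rw [Function.comp_apply, ProbabilityTheory.complexMGF,
      integral_withDensity_eq_integral_toReal_smul hmeas (by simp)]
    refine setIntegral_congr_fun measurableSet_Ioi fun v hv => ?_
    rw [ENNReal.toReal_ofReal (Real.rpow_nonneg (le_of_lt hv) _), Complex.real_smul, id, neg_mul]
  have hexp : Iio 0 ⊆ interior (ProbabilityTheory.integrableExpSet id μ) := by
    refine interior_maximal (fun r hr => ?_) isOpen_Iio
    rw [ProbabilityTheory.integrableExpSet, mem_ofPred_eq,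
      integrable_withDensity_iff_integrable_smul' hmeas (by simp)]
    refine (integrableOn_rpow_mul_exp_neg_mul_rpow (p := 1) (s := s - 1) (b := -r) (by linarith)
      one_pos (by simpa using hr)).congr_fun (fun v hv => ?_) measurableSet_Ioi
    simp [ENNReal.toReal_ofReal (Real.rpow_nonneg (le_of_lt hv) _)]
  rw [hmgf]
  exact ProbabilityTheory.analyticOnNhd_complexMGF.comp (fun p _ => analyticAt_id.neg)
    fun p hp => hexp (by simpa using hp)

lemma integral_rpow_mul_cexp {s : ℝ} (hs : 0 < s) {p : ℂ} (hp : 0 < p.re) :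
    ∫ v in Ioi (0 : ℝ), ((v ^ (s - 1) : ℝ) : ℂ) * Complex.exp (-(p * v)) =
      p ^ (-s : ℂ) * Real.Gamma s := by
  have hopen : IsOpen {p : ℂ | 0 < p.re} := isOpen_lt continuous_const Complex.continuous_re
  have hcpow : AnalyticOnNhd ℂ (fun p : ℂ => p ^ (-s : ℂ) * Real.Gamma s) {p | 0 < p.re} :=
    DifferentiableOn.analyticOnNhd (fun p hp => ((differentiableAt_id.cpow_const
      (.inl hp)).mul_const _).differentiableWithinAt) hopen
  refine eqOn_of_frequently_ofReal_eq (analyticOnNhd_integral_rpow_mul_cexp hs) hcpow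
    (convex_halfSpace_re_gt 0).isPreconnected (x := 1) (by simp) (Eventually.frequently ?_) hp
  filter_upwards [nhdsWithin_le_nhds (lt_mem_nhds one_pos)] with r hr
  have harg : (r : ℂ).arg ≠ Real.pi := Complex.slitPlane_arg_ne_pi (.inl hr)
  rw [← Complex.Gamma_ofReal, Complex.cpow_neg, ← Complex.inv_cpow _ _ harg, ← one_div,
    ← Complex.integral_cpow_mul_exp_neg_mul_Ioi (by simpa using hs) hr]
  refine setIntegral_congr_fun measurableSet_Ioi fun v hv => ?_
  simp [Complex.ofReal_cpow (le_of_lt hv)]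

end LaplaceTransform

section LaplaceTransformHankelClifford

-- Each integration by parts lowers the index by one, and the second makes the kernel integrable.
lemma hasContinuousLaplaceTransform_hankelClifford {ν : ℝ} (hν : -1 < ν) (hν' : ν < 1 / 2) :
    HasContinuousLaplaceTransform (fun v => (hankelClifford ν v : ℂ)) 0 := by
  have hderiv : ∀ μ : ℝ, ∀ v ∈ Ici (1 : ℝ),
      HasDerivAt (fun v => (hankelClifford μ v : ℂ)) (hankelClifford (μ - 1) v) v :=
    fun μ v hv => (hasDerivAt_hankelClifford μ (one_pos.trans_le hv)).ofReal_comp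
  have hcont : ∀ μ, ContinuousOn (fun v => (hankelClifford μ v : ℂ)) (Ici 1) :=
    fun μ v hv => (hderiv μ v hv).continuousAt.continuousWithinAt
  have hzero : ∀ μ < (1 / 2 : ℝ), Tendsto (fun v => (hankelClifford μ v : ℂ)) atTop (nhds 0) :=
    fun μ hμ => by simpa using (tendsto_hankelClifford_atTop_zero hμ).ofReal
  have hint : IntegrableOn (fun v => (hankelClifford (ν - 1 - 1) v : ℂ)) (Ioi 1) :=
    ((integrableOn_hankelClifford_Ici_one (by linarith)).mono_set Ioi_subset_Ici_self).ofReal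
  exact .of_le le_rfl zero_le_one (fun R =>
      intervalIntegrable_iff.2 (intervalIntegrable_hankelClifford hν 0 R).def'.ofReal) <|
    .of_hasDerivAt (hderiv ν) (hcont _) (hzero ν hν') <|
    .of_hasDerivAt (hderiv (ν - 1)) (hcont _) (hzero _ (by linarith)) <|
    .of_integrableOn zero_le_one hint

/-- The Riemann–Liouville kernel `v^(s-1) / Γ(s)`, normalised to have Laplace transform `p^(-s)`. -/
noncomputable def riemannLiouvilleKernel (s v : ℝ) : ℝ :=
  v ^ (s - 1) / Real.Gamma s

lemma integral_riemannLiouvilleKernel_mul_cexp {s : ℝ} (hs : 0 < s) {p : ℂ} (hp : 0 < p.re) :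
    ∫ v in Ioi (0 : ℝ), (riemannLiouvilleKernel s v : ℂ) * Complex.exp (-(p * v)) =
      p ^ (-s : ℂ) := by
  have hΓ : (Real.Gamma s : ℂ) ≠ 0 := Complex.ofReal_ne_zero.2 (Real.Gamma_pos_of_pos hs).ne'
  simp only [riemannLiouvilleKernel, Complex.ofReal_div, div_mul_eq_mul_div, integral_div]
  rw [integral_rpow_mul_cexp hs hp, mul_div_cancel_right₀ _ hΓ]

-- The Bochner integral of a nonintegrable function is zero, so a nonzero value gives integrability.
lemma integrableOn_riemannLiouvilleKernel_mul_cexp {s : ℝ} (hs : 0 < s) {p : ℂ} (hp : 0 < p.re) :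
    IntegrableOn (fun v => (riemannLiouvilleKernel s v : ℂ) * Complex.exp (-(p * v))) (Ioi 0) := by
  refine .of_integral_ne_zero ?_
  rw [integral_riemannLiouvilleKernel_mul_cexp hs hp]
  exact Complex.cpow_ne_zero_iff.2 (.inl (Complex.ne_zero_of_re_pos hp))

lemma integral_norm_riemannLiouvilleKernel_mul_cexp {s : ℝ} (hs : 0 < s) {p : ℂ} (hp : 0 < p.re) :
    ∫ v in Ioi (0 : ℝ), ‖(riemannLiouvilleKernel s v : ℂ) * Complex.exp (-(p * v))‖ =
      p.re⁻¹ ^ s := by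
  have hΓ : 0 < Real.Gamma s := Real.Gamma_pos_of_pos hs
  have hnorm : ∀ v ∈ Ioi (0 : ℝ), ‖(riemannLiouvilleKernel s v : ℂ) * Complex.exp (-(p * v))‖ =
      v ^ (s - 1) * Real.exp (-(p.re * v)) / Real.Gamma s := fun v hv => by
    rw [norm_mul, Complex.norm_real, Complex.norm_exp, Complex.neg_re, Complex.re_mul_ofReal,
      riemannLiouvilleKernel,
      Real.norm_of_nonneg (div_nonneg (Real.rpow_nonneg (le_of_lt hv) _) hΓ.le)]
    ring
  rw [setIntegral_congr_fun measurableSet_Ioi hnorm, integral_div,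
    Real.integral_rpow_mul_exp_neg_mul_Ioi hs hp, mul_div_cancel_right₀ _ hΓ.ne', one_div]

lemma hasSum_hankelClifford (ν : ℝ) {v : ℝ} (hv : 0 < v) :
    HasSum (fun k : ℕ => (-1) ^ k / k.factorial * riemannLiouvilleKernel (ν + k + 1) v)
      (hankelClifford ν v) := by
  rw [hankelClifford]
  convert! (hasSum_besselClifford ν (-v)).mul_left (v ^ ν) using 2 with k
  rw [riemannLiouvilleKernel, add_sub_cancel_right, Real.rpow_add hv, Real.rpow_natCast, neg_pow v]
  ring

lemma hasSum_cpow_div_factorial (ν : ℝ) {p : ℂ} (hp : p ≠ 0) :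
    HasSum (fun k : ℕ => (-1) ^ k / k.factorial * p ^ (-(ν + k + 1 : ℝ) : ℂ))
      (p ^ (-(ν + 1) : ℂ) * Complex.exp (-p⁻¹)) := by
  rw [Complex.exp_eq_exp_ℂ]
  convert! (NormedSpace.expSeries_div_hasSum_exp (-p⁻¹)).mul_left (p ^ (-(ν + 1) : ℂ)) using 2
    with k
  have hpow : p ^ (-(ν + k + 1 : ℝ) : ℂ) = p ^ (-(ν + 1) : ℂ) * p⁻¹ ^ k := by
    rw [inv_pow, ← Complex.cpow_natCast, ← Complex.cpow_neg, ← Complex.cpow_add _ _ hp]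
    push_cast
    ring_nf
  rw [hpow, neg_pow p⁻¹]
  ring

lemma integral_hankelClifford_mul_cexp {ν : ℝ} (hν : -1 < ν) {p : ℂ} (hp : 0 < p.re) :
    ∫ v in Ioi (0 : ℝ), (hankelClifford ν v : ℂ) * Complex.exp (-(p * v)) =
      p ^ (-(ν + 1) : ℂ) * Complex.exp (-p⁻¹) := by
  have hpos : ∀ k : ℕ, 0 < ν + k + 1 := fun k => by linarith [k.cast_nonneg (α := ℝ)]
  set F : ℕ → ℝ → ℂ := fun k v => (-1) ^ k / k.factorial *
    (riemannLiouvilleKernel (ν + k + 1) v * Complex.exp (-(p * v)))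
  have hint : ∀ k, IntegrableOn (F k) (Ioi 0) := fun k =>
    (integrableOn_riemannLiouvilleKernel_mul_cexp (hpos k) hp).const_mul _
  have hnorm : ∀ k, ∫ v in Ioi (0 : ℝ), ‖F k v‖ =
      p.re⁻¹ ^ (ν + 1) * (p.re⁻¹ ^ k / k.factorial) := fun k => by
    simp only [F, norm_mul ((-1) ^ k / (k.factorial : ℂ)), integral_const_mul]
    rw [integral_norm_riemannLiouvilleKernel_mul_cexp (hpos k) hp, add_right_comm,
      Real.rpow_add (inv_pos.2 hp), Real.rpow_natCast]
    simp only [norm_div, norm_pow, norm_neg, norm_one, one_pow, RCLike.norm_natCast]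
    ring
  have hvalue : ∀ k, ∫ v in Ioi (0 : ℝ), F k v =
      (-1) ^ k / k.factorial * p ^ (-(ν + k + 1 : ℝ) : ℂ) := fun k => by
    rw [integral_const_mul, integral_riemannLiouvilleKernel_mul_cexp (hpos k) hp]
  have hsummable : Summable fun k => ∫ v in Ioi (0 : ℝ), ‖F k v‖ := by
    simp only [hnorm]
    exact (Real.summable_pow_div_factorial p.re⁻¹).mul_left _
  have hseries := hasSum_integral_of_summable_integral_norm hint hsummable
  simp only [hvalue] at hseries
  rw [← hseries.unique (hasSum_cpow_div_factorial ν (Complex.ne_zero_of_re_pos hp))]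
  refine setIntegral_congr_fun measurableSet_Ioi fun v hv => ?_
  have hsum := ((Complex.hasSum_ofReal.2 (hasSum_hankelClifford ν hv)).mul_right
    (Complex.exp (-(p * v)))).tsum_eq
  push_cast at hsum
  simp only [F, ← hsum, mul_assoc]

lemma integrableOn_hankelClifford_mul_cexp {ν : ℝ} (hν : -1 < ν) {p : ℂ} (hp : 0 < p.re) :
    IntegrableOn (fun v => (hankelClifford ν v : ℂ) * Complex.exp (-(p * v))) (Ioi 0) := by
  refine .of_integral_ne_zero ?_
  rw [integral_hankelClifford_mul_cexp hν hp]
  exact mul_ne_zero (Complex.cpow_ne_zero_iff.2 (.inl (Complex.ne_zero_of_re_pos hp)))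
    (Complex.exp_ne_zero _)

lemma tendsto_integral_hankelClifford_mul_cexp {ν : ℝ} (hν : -1 < ν) (hν' : ν < 1 / 2) {p : ℂ}
    (hp : p ∈ puncturedRightHalfPlane) :
    Tendsto (fun R : ℝ => ∫ v in (0 : ℝ)..R, (hankelClifford ν v : ℂ) * Complex.exp (-(p * v)))
      atTop (nhds (p ^ (-(ν + 1) : ℂ) * Complex.exp (-p⁻¹))) := by
  have hcont : ContinuousOn (fun p : ℂ => p ^ (-(ν + 1) : ℂ) * Complex.exp (-p⁻¹))
      puncturedRightHalfPlane :=
    (continuousOn_id.cpow_const fun q hq => puncturedRightHalfPlane_subset_slitPlane hq).mul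
      (continuousOn_id.inv₀ fun q hq => hq.2).neg.cexp
  exact (hasContinuousLaplaceTransform_hankelClifford hν hν').tendsto_of_integral_eq hcont
    (fun _ => integrableOn_hankelClifford_mul_cexp hν)
    (fun _ => integral_hankelClifford_mul_cexp hν) hp

end LaplaceTransformHankelClifford

section SchrodingerKernel

lemma ofReal_mul_cpow {r : ℝ} (hr : 0 < r) {z : ℂ} (hz : z ≠ 0) (s : ℂ) :
    (r * z) ^ s = (r : ℂ) ^ s * z ^ s := by
  have hr0 : (r : ℂ) ≠ 0 := Complex.ofReal_ne_zero.2 hr.ne'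
  rw [Complex.cpow_def_of_ne_zero (mul_ne_zero hr0 hz), Complex.cpow_def_of_ne_zero hr0,
    Complex.cpow_def_of_ne_zero hz, Complex.log_ofReal_mul hr hz, Complex.ofReal_log hr.le,
    add_mul, Complex.exp_add]

lemma cpow_mul_cexp_mul_cpow_neg_mul_cexp_neg {p : ℂ} (hp : p ≠ 0) (s q : ℂ) :
    p ^ s * Complex.exp q * (p ^ (-s) * Complex.exp (-q)) = 1 := by
  rw [Complex.cpow_neg, Complex.exp_neg, mul_mul_mul_comm,
    mul_inv_cancel₀ (Complex.cpow_ne_zero_iff.2 (.inl hp)),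
    mul_inv_cancel₀ (Complex.exp_ne_zero _), one_mul]

lemma neg_I_div_cpow_of_pos {t : ℝ} (ht : 0 < t) (s : ℝ) :
    (-Complex.I / (2 * t)) ^ (s : ℂ) =
      Complex.exp (-Complex.I * (s * Real.pi / 2 : ℝ)) * ((2 * |t|) ^ (-s) : ℝ) := by
  have hpos : 0 < 2 * t := by positivity
  have hmul : -Complex.I / (2 * t) = ((2 * t)⁻¹ : ℝ) * -Complex.I := by
    push_cast
    ring
  rw [hmul, ofReal_mul_cpow (inv_pos.2 hpos) (neg_ne_zero.2 Complex.I_ne_zero),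
    Complex.cpow_def_of_ne_zero (neg_ne_zero.2 Complex.I_ne_zero), Complex.log_neg_I,
    ← Complex.ofReal_cpow (inv_pos.2 hpos).le, Real.inv_rpow hpos.le, ← Real.rpow_neg hpos.le,
    abs_of_pos ht, mul_comm]
  push_cast
  ring_nf

lemma neg_I_div_cpow_of_neg {t : ℝ} (ht : t < 0) (s : ℝ) :
    (-Complex.I / (2 * t)) ^ (s : ℂ) =
      Complex.exp (Complex.I * (s * Real.pi / 2 : ℝ)) * ((2 * |t|) ^ (-s) : ℝ) := by
  have hpos : 0 < 2 * |t| := mul_pos two_pos (abs_pos.2 ht.ne)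
  have hmul : -Complex.I / (2 * t) = ((2 * |t|)⁻¹ : ℝ) * Complex.I := by
    rw [abs_of_neg ht, mul_neg, inv_neg]
    push_cast
    ring
  rw [hmul, ofReal_mul_cpow (inv_pos.2 hpos) Complex.I_ne_zero,
    Complex.cpow_def_of_ne_zero Complex.I_ne_zero, Complex.log_I,
    ← Complex.ofReal_cpow (inv_pos.2 hpos).le, Real.inv_rpow hpos.le, ← Real.rpow_neg hpos.le,
    mul_comm]
  push_cast
  ring_nf

lemma besselJ_eq_besselClifford (ν : ℝ) {z : ℝ} (hz : 0 < z) :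
    besselJ ν z = ((z / 2) ^ ν * besselClifford ν (-(z / 2) ^ 2) : ℝ) := by
  have hz2 : 0 < z / 2 := by positivity
  rw [besselJ, besselClifford, ← tsum_mul_left, Complex.ofReal_tsum]
  refine tsum_congr fun k => ?_
  have hpow : ((z : ℂ) / 2) ^ (2 * (k : ℂ) + ν) = ((z / 2) ^ (2 * k) * (z / 2) ^ ν : ℝ) := by
    rw [← Real.rpow_natCast, ← Real.rpow_add hz2, Complex.ofReal_cpow hz2.le]
    push_cast
    rfl
  have hΓ : Complex.Gamma (ν + k + 1) = Real.Gamma (ν + k + 1) := by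
    rw [← Complex.Gamma_ofReal]
    push_cast
    rfl
  rw [hpow, hΓ, Complex.Gamma_nat_eq_factorial, neg_pow ((z / 2) ^ 2), ← pow_mul]
  push_cast
  ring

lemma rpow_neg_mul_besselJ (ν : ℝ) {z : ℝ} (hz : 0 < z) :
    ((z ^ (-ν) : ℝ) : ℂ) * besselJ ν z =
      (2 ^ (-ν) * besselClifford ν (-(z / 2) ^ 2) : ℝ) := by
  rw [besselJ_eq_besselClifford ν hz, ← Complex.ofReal_mul, ← mul_assoc,
    Real.div_rpow hz.le zero_le_two, Real.rpow_neg hz.le, Real.rpow_neg zero_le_two]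
  have := Real.rpow_pos_of_pos hz ν
  field_simp

-- The principal branch of the power absorbs the two phases `e^{∓i(a+1)π/4}`.
lemma Skernel_eq (a : ℝ) {x y t : ℝ} (hx : 0 < x) (hy : 0 < y) (ht : t ≠ 0) :
    Skernel a x y t = (-Complex.I / (2 * t)) ^ (((a + 1) / 2 : ℝ) : ℂ) *
      (2 ^ ((1 - a) / 2) * besselClifford ((a - 1) / 2) (-(x * y / (4 * t)) ^ 2) : ℝ) *
      Complex.exp (Complex.I * (x ^ 2 + y ^ 2) / (4 * t)) := by
  have hz : 0 < x * y / (2 * |t|) := by positivity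
  have hsq : (x * y / (2 * |t|) / 2) ^ 2 = (x * y / (4 * t)) ^ 2 := by
    simp only [div_pow, mul_pow, sq_abs]
    ring
  have hbessel := rpow_neg_mul_besselJ ((a - 1) / 2) hz
  rw [hsq, show -((a - 1) / 2) = (1 - a) / 2 by ring] at hbessel
  rw [← hbessel, Skernel, neg_div]
  obtain ht | ht := ht.lt_or_gt
  · rw [if_neg ht.not_gt, neg_I_div_cpow_of_neg ht, abs_of_neg ht]
    push_cast
    ring_nf
  · rw [if_pos ht, neg_I_div_cpow_of_pos ht, abs_of_pos ht]
    push_cast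
    ring_nf

/-- The Laplace variable `p` of the substitution that turns `S_a(x,y,t) y^a dy` into
`p^((a+1)/2) e^(1/p)` times the Laplace integrand of a Hankel–Clifford kernel. -/
noncomputable def laplaceVariable (x t : ℝ) : ℂ := -(4 * t * Complex.I / x ^ 2)

/-- The scale `c` of the substitution `v = c y²` that turns `S_a(x,y,t) y^a dy` into the Laplace
integrand of a Hankel–Clifford kernel in `v`. -/
noncomputable def laplaceScale (x t : ℝ) : ℝ := (x / (4 * t)) ^ 2

variable {x t : ℝ}

lemma laplaceScale_pos (hx : 0 < x) (ht : t ≠ 0) : 0 < laplaceScale x t := by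
  rw [laplaceScale]
  positivity

lemma laplaceVariable_mem_puncturedRightHalfPlane (hx : 0 < x) (ht : t ≠ 0) :
    laplaceVariable x t ∈ puncturedRightHalfPlane := by
  have hx0 : (x : ℂ) ≠ 0 := Complex.ofReal_ne_zero.2 hx.ne'
  have hreal : laplaceVariable x t = (-(4 * t / x ^ 2) : ℝ) * Complex.I := by
    rw [laplaceVariable]
    push_cast
    ring
  refine ⟨?_, by simp [laplaceVariable, ht, hx0]⟩
  rw [hreal, Complex.re_ofReal_mul, Complex.I_re, mul_zero]

lemma laplaceVariable_cpow (hx : 0 < x) (ht : t ≠ 0) (s : ℝ) :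
    laplaceVariable x t ^ (s : ℂ) =
      ((2 * laplaceScale x t) ^ (-s) : ℝ) * (-Complex.I / (2 * t)) ^ (s : ℂ) := by
  have hc : 0 < 2 * laplaceScale x t := mul_pos two_pos (laplaceScale_pos hx ht)
  have hx0 : (x : ℂ) ≠ 0 := Complex.ofReal_ne_zero.2 hx.ne'
  have ht0 : (t : ℂ) ≠ 0 := Complex.ofReal_ne_zero.2 ht
  have hmul : laplaceVariable x t =
      ((2 * laplaceScale x t)⁻¹ : ℝ) * (-Complex.I / (2 * t)) := by
    rw [laplaceVariable, laplaceScale]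
    push_cast
    field_simp
    ring
  rw [hmul, ofReal_mul_cpow (inv_pos.2 hc) (by simp [ht0]), ← Complex.ofReal_cpow
    (inv_pos.2 hc).le, Real.inv_rpow hc.le, ← Real.rpow_neg hc.le]

lemma cexp_phase_eq (hx : 0 < x) (ht : t ≠ 0) (y : ℝ) :
    Complex.exp (Complex.I * (x ^ 2 + y ^ 2) / (4 * t)) = Complex.exp (laplaceVariable x t)⁻¹ *
      Complex.exp (-(laplaceVariable x t * (laplaceScale x t * y ^ 2 : ℝ))) := by
  have hx0 : (x : ℂ) ≠ 0 := Complex.ofReal_ne_zero.2 hx.ne'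
  have ht0 : (t : ℂ) ≠ 0 := Complex.ofReal_ne_zero.2 ht
  have hI := Complex.I_ne_zero
  rw [← Complex.exp_add, laplaceVariable, laplaceScale]
  congr 1
  push_cast
  field_simp
  rw [Complex.I_sq]
  ring

lemma two_mul_rpow_mul_rpow_eq {c y : ℝ} (hc : 0 < c) (hy : 0 < y) (ν : ℝ) :
    (2 * c) ^ (-(ν + 1)) * (2 * c * y) * (c * y ^ 2) ^ ν = 2 ^ (-ν) * y ^ (2 * ν + 1) := by
  have h2c : 0 < 2 * c := by positivity
  have hpow : (c * y ^ 2) ^ ν = (2 * c) ^ ν * 2 ^ (-ν) * y ^ (2 * ν) := by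
    rw [Real.rpow_mul hy.le, Real.rpow_two, Real.rpow_neg zero_le_two, ← Real.inv_rpow zero_le_two,
      ← Real.mul_rpow h2c.le (by positivity), ← Real.mul_rpow (by positivity) (by positivity)]
    ring_nf
  rw [hpow, Real.rpow_add_one hy.ne', Real.rpow_neg h2c.le, Real.rpow_add_one h2c.ne']
  have := Real.rpow_pos_of_pos h2c ν
  field_simp

lemma Skernel_mul_rpow_eq (a : ℝ) (hx : 0 < x) (ht : t ≠ 0) {y : ℝ} (hy : 0 < y) :
    Skernel a x y t * (y ^ a : ℝ) =
      laplaceVariable x t ^ (((a + 1) / 2 : ℝ) : ℂ) * Complex.exp (laplaceVariable x t)⁻¹ *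
        ((2 * laplaceScale x t * y : ℝ) •
          (hankelClifford ((a - 1) / 2) (laplaceScale x t * y ^ 2) *
            Complex.exp (-(laplaceVariable x t * (laplaceScale x t * y ^ 2 : ℝ))))) := by
  have harg : (x * y / (4 * t)) ^ 2 = laplaceScale x t * y ^ 2 := by
    rw [laplaceScale]
    ring
  have hpow := two_mul_rpow_mul_rpow_eq (laplaceScale_pos hx ht) hy ((a - 1) / 2)
  rw [show (a - 1) / 2 + 1 = (a + 1) / 2 by ring, show -((a - 1) / 2) = (1 - a) / 2 by ring,
    show 2 * ((a - 1) / 2) + 1 = a by ring] at hpow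
  have hreal : 2 ^ ((1 - a) / 2) * besselClifford ((a - 1) / 2) (-(x * y / (4 * t)) ^ 2) * y ^ a =
      (2 * laplaceScale x t) ^ (-((a + 1) / 2)) * (2 * laplaceScale x t * y) *
        hankelClifford ((a - 1) / 2) (laplaceScale x t * y ^ 2) := by
    rw [harg, hankelClifford, ← mul_assoc, hpow]
    ring
  rw [Skernel_eq a hx hy ht, cexp_phase_eq hx ht, laplaceVariable_cpow hx ht, Complex.real_smul]
  linear_combination (norm := skip) (-Complex.I / (2 * t)) ^ (((a + 1) / 2 : ℝ) : ℂ) *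
    Complex.exp (laplaceVariable x t)⁻¹ *
    Complex.exp (-(laplaceVariable x t * (laplaceScale x t * y ^ 2 : ℝ))) *
    congrArg ((↑) : ℝ → ℂ) hreal
  push_cast
  ring

lemma integral_Skernel_mul_rpow_eq (a : ℝ) (hx : 0 < x) (ht : t ≠ 0) {R : ℝ} (hR : 0 ≤ R) :
    ∫ y in (0 : ℝ)..R, Skernel a x y t * (y ^ a : ℝ) =
      laplaceVariable x t ^ (((a + 1) / 2 : ℝ) : ℂ) * Complex.exp (laplaceVariable x t)⁻¹ *
        ∫ v in (0 : ℝ)..laplaceScale x t * R ^ 2,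
          hankelClifford ((a - 1) / 2) v * Complex.exp (-(laplaceVariable x t * v)) := by
  have hderiv : ∀ y : ℝ, HasDerivAt (fun y => laplaceScale x t * y ^ 2)
      (2 * laplaceScale x t * y) y := fun y =>
    ((hasDerivAt_pow 2 y).const_mul (laplaceScale x t)).congr_deriv <| by
      simp only [Nat.cast_ofNat, Nat.add_one_sub_one, pow_one]
      ring
  have hsubst := intervalIntegral.integral_deriv_smul_comp_of_deriv_nonneg (a := 0) (b := R)
    (g := fun v : ℝ => (hankelClifford ((a - 1) / 2) v : ℂ) *
      Complex.exp (-(laplaceVariable x t * v)))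
    (fun y _ => (hderiv y).continuousAt.continuousWithinAt) (fun y _ => hderiv y) fun y hy => by
      rw [min_eq_left hR] at hy
      exact mul_nonneg (mul_nonneg zero_le_two (laplaceScale_pos hx ht).le) hy.1.le
  rw [zero_pow two_ne_zero, mul_zero] at hsubst
  rw [← hsubst, ← intervalIntegral.integral_const_mul]
  refine intervalIntegral.integral_congr_ae (Eventually.of_forall fun y hy => ?_)
  rw [uIoc_of_le hR] at hy
  exact Skernel_mul_rpow_eq a hx ht hy.1

end SchrodingerKernel

/-- For `-1 < a < 2`, `x > 0`, `t ≠ 0`, the kernel has total mass one as a generalized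
Riemann integral: `lim_{R→∞} ∫₀^R S_a(x,y,t) y^a dy = 1`. -/
theorem kernel_total_mass (a : ℝ) (ha1 : -1 < a) (ha2 : a < 2) (x t : ℝ)
    (hx : 0 < x) (ht : t ≠ 0) :
    Tendsto (fun R : ℝ => ∫ y in (0:ℝ)..R, Skernel a x y t * ((y ^ a : ℝ) : ℂ))
      atTop (nhds 1) := by
  set p := laplaceVariable x t
  have hp : p ∈ puncturedRightHalfPlane := laplaceVariable_mem_puncturedRightHalfPlane hx ht
  have hupper : Tendsto (fun R : ℝ => laplaceScale x t * R ^ 2) atTop atTop :=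
    (tendsto_pow_atTop two_ne_zero).const_mul_atTop (laplaceScale_pos hx ht)
  have hexponent : (((a - 1) / 2 : ℝ) + 1 : ℂ) = ((a + 1) / 2 : ℝ) := by
    push_cast
    ring
  have hlim := ((tendsto_integral_hankelClifford_mul_cexp (ν := (a - 1) / 2) (by linarith)
    (by linarith) hp).comp hupper).const_mul (p ^ (((a + 1) / 2 : ℝ) : ℂ) * Complex.exp p⁻¹)
  rw [hexponent, cpow_mul_cexp_mul_cpow_neg_mul_cexp_neg hp.2] at hlim
  refine hlim.congr' ?_
  filter_upwards [eventually_ge_atTop 0] with R hR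
  exact (integral_Skernel_mul_rpow_eq a hx ht hR).symm
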